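/- arXiv:math/0609760 — 2 statements merged into one kernel-verified Lean document; each statement's English description precedes it below -/
import Mathlib

section
/- Let R = M_{n,m}(F) be a non-trivial matrix superalgebra with a superinvolution * over an algebraically closed field F of characteristic zero, and let G be a finite abelian group. Then R admits no fine G-grading that is compatible with the superalgebra structure and respected by * (i.e., there is no fine G-grading R = ⊕_{g∈G} R_g with R_g = (R_g ∩ R₀) ⊕ (R_g ∩ R₁) and (R_g)* = R_g for all g ∈ G). -/
open scoped TensorProduct

/-- A `G`-grading on an `F`-algebra `R`: an internal direct sum vector-space
decomposition `R = ⊕_{g ∈ G} A g` with `A g * A h ⊆ A (g * h)`. -/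
structure IsAlgGrading (F : Type*) [Field F] (G : Type*) [Group G] [DecidableEq G]
    {R : Type*} [Ring R] [Algebra F R] (A : G → Submodule F R) : Prop where
  internal : DirectSum.IsInternal A
  mul_mem : ∀ {g h : G} {x y : R}, x ∈ A g → y ∈ A h → x * y ∈ A (g * h)

/-- A superalgebra structure on an `F`-algebra `R`: a `ℤ₂`-grading `R = R₀ ⊕ R₁`. -/
structure IsSuperGrading (F : Type*) [Field F] {R : Type*} [Ring R] [Algebra F R]
    (S : ZMod 2 → Submodule F R) : Prop where
  internal : DirectSum.IsInternal S
  mul_mem : ∀ {p q : ZMod 2} {x y : R}, x ∈ S p → y ∈ S q → x * y ∈ S (p + q)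

/-- The sign `(-1)^{pq}` occurring in the superinvolution identity. -/
def superSign (F : Type*) [Field F] (p q : ZMod 2) : F := if p = 1 ∧ q = 1 then -1 else 1

/-- A superinvolution on a superalgebra `R = ⊕ S p`:
a `ℤ₂`-graded linear map of order 2 with `(ab)* = (-1)^{|a||b|} b* a*`. -/
structure IsSuperinvolution (F : Type*) [Field F] {R : Type*} [Ring R] [Algebra F R]
    (S : ZMod 2 → Submodule F R) (φ : R →ₗ[F] R) : Prop where
  invol : ∀ x, φ (φ x) = x
  graded : ∀ (p : ZMod 2) (x : R), x ∈ S p → φ x ∈ S p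
  anti : ∀ {p q : ZMod 2} {x y : R}, x ∈ S p → y ∈ S q →
    φ (x * y) = superSign F p q • (φ y * φ x)

/-- A grading is fine if every nonzero homogeneous component is one-dimensional. -/
def IsFineGrading (F : Type*) [Field F] {G R : Type*} [Group G] [Ring R] [Algebra F R]
    (A : G → Submodule F R) : Prop :=
  ∀ g, A g ≠ ⊥ → Module.finrank F (A g) = 1

/-- Compatibility of a `G`-grading with a superalgebra structure:
`R_g = (R_g ∩ R₀) ⊕ (R_g ∩ R₁)`. -/
def SuperCompatible (F : Type*) [Field F] {G R : Type*} [Group G] [Ring R] [Algebra F R]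
    (A : G → Submodule F R) (S : ZMod 2 → Submodule F R) : Prop :=
  ∀ g, A g = (A g ⊓ S 0) ⊔ (A g ⊓ S 1)

/-- The homogeneous component of degree `g` of the elementary grading on a matrix
algebra determined by the tuple `t`: it is spanned by the matrix units `E a b` with
`(t a)⁻¹ * t b = g`. -/
def elemGrading (F : Type*) [Field F] {G : Type*} [Group G] {ι : Type*} (t : ι → G) (g : G) :
    Submodule F (Matrix ι ι F) where
  carrier := {X | ∀ a b, (t a)⁻¹ * t b ≠ g → X a b = 0}
  add_mem' := by
    intro X Y hX hY a b h
    simp only [Matrix.add_apply, hX a b h, hY a b h, add_zero]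
  zero_mem' := by intro a b h; simp
  smul_mem' := by
    intro c X hX a b h
    simp only [Matrix.smul_apply, hX a b h, smul_zero]

/-- The `ℤ₂`-components of the matrix superalgebra structure determined by a parity
function `π` on the indices: the component of parity `p` consists of the matrices
supported on positions `(a,b)` with `π a + π b = p`. -/
def parSuper (F : Type*) [Field F] {ι : Type*} (π : ι → ZMod 2) (p : ZMod 2) :
    Submodule F (Matrix ι ι F) where
  carrier := {X | ∀ a b, π a + π b ≠ p → X a b = 0}
  add_mem' := by
    intro X Y hX hY a b h
    simp only [Matrix.add_apply, hX a b h, hY a b h, add_zero]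
  zero_mem' := by intro a b h; simp
  smul_mem' := by
    intro c X hX a b h
    simp only [Matrix.smul_apply, hX a b h, smul_zero]

/-- The parity function of the matrix superalgebra `M_{n,m}(F)`, with indices
`Fin n ⊕ Fin m`: the first block is even, the second odd. -/
def matPar {n m : ℕ} : Fin n ⊕ Fin m → ZMod 2 := Sum.elim (fun _ => 0) (fun _ => 1)

/-- The superalgebra structure of the matrix superalgebra `M_{n,m}(F)`: the even part
consists of block-diagonal, the odd part of block-antidiagonal matrices. -/
def matSuper (F : Type*) [Field F] (n m : ℕ) (p : ZMod 2) :
    Submodule F (Matrix (Fin n ⊕ Fin m) (Fin n ⊕ Fin m) F) :=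
  parSuper F matPar p

/-- The `ℤ₂`-components of the superalgebra structure of type `Q`, determined by the
index involution `sw` (which exchanges the two copies inside each block):
the even part consists of `sw`-invariant matrices, the odd part of `sw`-anti-invariant ones. -/
def swSuper (F : Type*) [Field F] {ι : Type*} (sw : ι → ι) (p : ZMod 2) :
    Submodule F (Matrix ι ι F) where
  carrier := {X | ∀ a b, X (sw a) (sw b) = (if p = 0 then 1 else -1) * X a b}
  add_mem' := by
    intro X Y hX hY a b
    simp only [Matrix.add_apply, hX a b, hY a b, mul_add]
  zero_mem' := by intro a b; simp
  smul_mem' := by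
    intro c X hX a b
    simp only [Matrix.smul_apply, hX a b, smul_eq_mul]
    ring

/-- The supertranspose `X ↦ X^τ = [[Aᵗ, Cᵗ], [-Bᵗ, Dᵗ]]`, for a general parity
function `π` on the matrix indices. -/
def tauL (F : Type*) [Field F] {ι : Type*} (π : ι → ZMod 2) :
    Matrix ι ι F →ₗ[F] Matrix ι ι F where
  toFun X := fun a b => (if π a = 1 ∧ π b = 0 then (-1 : F) else 1) * X b a
  map_add' X Y := by funext a b; exact mul_add _ _ _
  map_smul' c X := by
    funext a b
    exact mul_left_comm _ _ _

theorem aux_phi_pm {F : Type*} [Field F] {R : Type*} [Ring R] [Algebra F R]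
    (B : Submodule F R) (hB : B ≠ ⊥ → Module.finrank F B = 1) (φ : R →ₗ[F] R)
    (hinv : ∀ x, φ (φ x) = x) (hmap : ∀ x ∈ B, φ x ∈ B) (x : R) (hx : x ∈ B) :
    φ x = x ∨ φ x = -x := by
  by_cases h0 : x = 0
  · left; simp [h0]
  have hne : B ≠ ⊥ := fun h => h0 (by simpa [h] using hx)
  have h1 := hB hne
  have hv : (⟨x, hx⟩ : B) ≠ 0 := fun h => h0 (congrArg Subtype.val h)
  obtain ⟨c, hc⟩ := (finrank_eq_one_iff_of_nonzero' _ hv).1 h1 ⟨φ x, hmap x hx⟩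
  have hc' : c • x = φ x := congrArg Subtype.val hc
  have h2 : (c * c) • x = (1 : F) • x := by
    rw [mul_smul, hc', ← map_smul, hc', hinv, one_smul]
  have h3 : c * c = 1 := smul_left_injective F h0 h2
  rcases mul_self_eq_one_iff.1 h3 with h | h
  · left; rw [← hc', h, one_smul]
  · right; rw [← hc', h, neg_smul, one_smul]

theorem aux_sign (F : Type*) [Field F] (p q : ZMod 2) :
    superSign F p q = 1 ∨ superSign F p q = -1 := by
  unfold superSign; split_ifs <;> simp

/-- **Theorem.** Let `R = M_{n,m}(F)` be a non-trivial matrix superalgebra with a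
superinvolution `*` over an algebraically closed field of characteristic zero, and `G`
a finite abelian group.  Then `R` admits no fine `G`-grading compatible with the
superalgebra structure and respected by `*`. -/
theorem no_fine_grading_with_superinvolution
    (F : Type*) [Field F] [IsAlgClosed F] [CharZero F]
    (G : Type*) [CommGroup G] [Fintype G] [DecidableEq G]
    (n m : ℕ) (hn : 0 < n) (hm : 0 < m)
    (φ : Matrix (Fin n ⊕ Fin m) (Fin n ⊕ Fin m) F →ₗ[F]
      Matrix (Fin n ⊕ Fin m) (Fin n ⊕ Fin m) F)
    (hφ : IsSuperinvolution F (matSuper F n m) φ) :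
    ¬ ∃ A : G → Submodule F (Matrix (Fin n ⊕ Fin m) (Fin n ⊕ Fin m) F),
        IsAlgGrading F G A ∧ IsFineGrading F A ∧
        SuperCompatible F A (matSuper F n m) ∧
        (∀ g, ∀ x ∈ A g, φ x ∈ A g) := by
  rintro ⟨A, hA, hfine, hcomp, hpres⟩
  have hpm : ∀ g x, x ∈ A g → φ x = x ∨ φ x = -x := fun g x hx =>
    aux_phi_pm (A g) (hfine g) φ hφ.invol (hpres g) x hx
  have htop : ⨆ g, A g = ⊤ := hA.internal.submodule_iSup_eq_top
  -- a homogeneous odd element supercommutes up to sign with bihomogeneous elements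
  have hcomm : ∀ g x, x ∈ A g → x ∈ matSuper F n m 1 → ∀ h y p, y ∈ A h →
      y ∈ matSuper F n m p → y * x = x * y ∨ y * x = -(x * y) := by
    intro g x hx hx1 h y p hy hyp
    have e := hφ.anti hx1 hyp
    have e1 := hpm _ _ (hA.mul_mem hx hy)
    rcases aux_sign F 1 p with hs | hs <;> rw [hs] at e <;>
    rcases hpm _ _ hx with h1 | h1 <;> rcases hpm _ _ hy with h2 | h2 <;>
    rcases e1 with h3 | h3 <;> rw [h1, h2, h3] at e <;>
    simp only [one_smul, neg_smul, mul_neg, neg_mul, neg_neg, neg_inj] at e <;>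
    first
      | exact Or.inl e.symm
      | exact Or.inr e.symm
      | (right; rw [e, neg_neg])
      | (left; rw [← neg_eq_iff_eq_neg.2 e, neg_neg])
      | (right; rw [← e])
  have hind : ∀ P : Submodule F (Matrix (Fin n ⊕ Fin m) (Fin n ⊕ Fin m) F),
      (∀ h y p, y ∈ A h → y ∈ matSuper F n m p → y ∈ P) → ∀ z, z ∈ P := by
    intro P hP z
    have : (⊤ : Submodule F (Matrix (Fin n ⊕ Fin m) (Fin n ⊕ Fin m) F)) ≤ P := by
      rw [← htop]
      refine iSup_le fun g => ?_
      rw [hcomp g]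
      exact sup_le (fun y hy => hP g y 0 hy.1 hy.2) (fun y hy => hP g y 1 hy.1 hy.2)
    exact this trivial
  have hone : (1 : Matrix (Fin n ⊕ Fin m) (Fin n ⊕ Fin m) F) ∈ matSuper F n m 0 := by
    intro a b hab
    refine Matrix.one_apply_ne fun h => hab ?_
    subst h
    exact CharTwo.add_self_eq_zero _
  have hφ1 : φ 1 = 1 := by
    have key : ∀ y, φ 1 * φ y = φ y := by
      intro y
      have := hind (LinearMap.eqLocus ((LinearMap.mulLeft F (φ 1)).comp φ) φ) (by
        intro h y p _ hyp
        have e := hφ.anti hyp hone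
        have hs : superSign F p 0 = 1 := by simp [superSign]
        rw [mul_one, hs, one_smul] at e
        exact e.symm) y
      exact this
    have := key (φ 1)
    rwa [hφ.invol, mul_one] at this
  have hzero : ∀ g x, x ∈ A g → x ∈ matSuper F n m 1 → x = 0 := by
    intro g x hx hx1
    have hc := hcomm g x hx hx1
    have hcen : ∀ y, x * x * y = y * (x * x) := by
      intro y
      have := hind (LinearMap.eqLocus (LinearMap.mulLeft F (x * x))
        (LinearMap.mulRight F (x * x))) (by
        intro h y p hy hyp
        change x * x * y = y * (x * x)
        rcases hc h y p hy hyp with e | e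
        · rw [← mul_assoc y, e, mul_assoc, mul_assoc, e]
        · rw [← mul_assoc y, e, neg_mul, mul_assoc x y x, e, mul_neg, neg_neg, mul_assoc]) y
      exact this
    have hneg : φ (x * x) = -(x * x) := by
      have e := hφ.anti hx1 hx1
      have hs : superSign F 1 1 = -1 := by simp [superSign]
      rw [hs] at e
      rcases hpm _ _ hx with h1 | h1 <;> simpa [h1] using e
    have hsc : x * x ∈ Set.range (Matrix.scalar (Fin n ⊕ Fin m) : F →+* _) :=
      Matrix.mem_range_scalar_of_commute_single fun i j _ => (hcen _).symm
    obtain ⟨c, hcx⟩ := hsc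
    have hcx' : x * x = c • (1 : Matrix (Fin n ⊕ Fin m) (Fin n ⊕ Fin m) F) := by
      rw [← hcx, Matrix.smul_one_eq_diagonal]; rfl
    have hxx : x * x = 0 := by
      have h1 : φ (x * x) = x * x := by rw [hcx', map_smul, hφ1]
      have h2 : x * x = -(x * x) := h1.symm.trans hneg
      ext a b
      have h3 := congrFun (congrFun h2 a) b
      exact self_eq_neg.1 h3
    have hxyx : ∀ y, x * y * x = 0 := by
      intro y
      have := hind (LinearMap.ker ((LinearMap.mulRight F x).comp (LinearMap.mulLeft F x))) (by
        intro h y p hy hyp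
        change x * y * x = 0
        rcases hc h y p hy hyp with e | e
        · rw [mul_assoc, e, ← mul_assoc, hxx, zero_mul]
        · rw [mul_assoc, e, mul_neg, ← mul_assoc, hxx, zero_mul, neg_zero]) y
      exact this
    ext a b
    have := congrFun (congrFun (hxyx (Matrix.single b a 1)) a) b
    simpa [Matrix.mul_apply, Matrix.single_apply, ite_and] using this
  have hall := hind (matSuper F n m 0) (by
    intro h y p hy hyp
    have hp : p = 0 ∨ p = 1 := by
      clear hyp; revert p; decide
    rcases hp with rfl | rfl
    · exact hyp
    · rw [hzero h y hy hyp]; exact Submodule.zero_mem _)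
    (Matrix.single (Sum.inl ⟨0, hn⟩) (Sum.inr ⟨0, hm⟩) 1)
  have := hall (Sum.inl ⟨0, hn⟩) (Sum.inr ⟨0, hm⟩) (by simp [matPar])
  simp at this
end

section
/- Let R = M_n(F) = ⊕_{g∈G} R_g be a matrix algebra with an elementary G-grading. If the identity component R_e = A₁ ⊕ A₂ is the sum of two simple components, then there exists g ∈ G with g ≠ e such that A₁RA₂ ⊆ R_g. -/
open scoped TensorProduct

theorem simple_component_support
    (F : Type*) [Field F] (G : Type*) [Group G] (n : ℕ) (t : Fin n → G)
    (S : Submodule F (Matrix (Fin n) (Fin n) F)) (hne : S ≠ ⊥)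
    (hle : S ≤ elemGrading F t 1)
    (hideal : ∀ z ∈ elemGrading F t 1, ∀ x ∈ S, z * x ∈ S)
    (hsimple : ∀ I : Submodule F (Matrix (Fin n) (Fin n) F), I ≤ S →
      (∀ x ∈ S, ∀ y ∈ I, x * y ∈ I ∧ y * x ∈ I) → I = ⊥ ∨ I = S) :
    ∃ c : G, (∀ x ∈ S, ∀ a b, x a b ≠ 0 → t a = c ∧ t b = c) ∧
      ∃ x ∈ S, ∃ a b, x a b ≠ 0 := by
  classical
  obtain ⟨x, hx, hx0⟩ := Submodule.exists_mem_ne_zero_of_ne_bot hne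
  have hex : ∃ a b, x a b ≠ 0 := by
    by_contra! h
    exact hx0 (Matrix.ext h)
  obtain ⟨a, b, hab⟩ := hex
  have hdeg : ∀ y ∈ S, ∀ i j, t i ≠ t j → y i j = 0 := by
    intro y hy i j hij
    refine hle hy i j ?_
    rwa [ne_eq, inv_mul_eq_one]
  let I : Submodule F (Matrix (Fin n) (Fin n) F) :=
    { carrier := {y | y ∈ S ∧ ∀ i j, t i ≠ t a → y i j = 0}
      add_mem' := by
        rintro u v ⟨hu, hu'⟩ ⟨hv, hv'⟩
        exact ⟨S.add_mem hu hv, fun i j h => by simp [hu' i j h, hv' i j h]⟩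
      zero_mem' := ⟨S.zero_mem, fun i j h => by simp⟩
      smul_mem' := by
        rintro r u ⟨hu, hu'⟩
        exact ⟨S.smul_mem r hu, fun i j h => by simp [hu' i j h]⟩ }
  have hI : I = ⊥ ∨ I = S := by
    refine hsimple I (fun y hy => hy.1) ?_
    rintro u hu y ⟨hy, hy'⟩
    refine ⟨⟨hideal u (hle hu) y hy, fun i j h => ?_⟩,
      ⟨hideal y (hle hy) u hu, fun i j h => ?_⟩⟩
    · rw [Matrix.mul_apply]
      refine Finset.sum_eq_zero fun k _ => ?_
      by_cases hk : t i = t k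
      · rw [hy' k j (hk ▸ h), mul_zero]
      · rw [hdeg u hu i k hk, zero_mul]
    · rw [Matrix.mul_apply]
      exact Finset.sum_eq_zero fun k _ => by rw [hy' i k h, zero_mul]
  refine ⟨t a, ?_, x, hx, a, b, hab⟩
  rcases hI with hI | hI
  · exfalso
    let P : Matrix (Fin n) (Fin n) F := Matrix.diagonal fun i => if t i = t a then 1 else 0
    have hP : P ∈ elemGrading F t 1 := by
      intro i j hij
      refine Matrix.diagonal_apply_ne _ ?_
      rintro rfl
      simp at hij
    have hPx : P * x ∈ I := by
      refine ⟨hideal P hP x hx, fun i j h => ?_⟩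
      simp [P, Matrix.diagonal_mul, h]
    rw [hI, Submodule.mem_bot] at hPx
    have := congrFun (congrFun hPx a) b
    simp [P, Matrix.diagonal_mul] at this
    exact hab this
  · intro y hy i j hij
    have hyI : y ∈ I := hI ▸ hy
    have h1 : t i = t a := by
      by_contra h
      exact hij (hyI.2 i j h)
    refine ⟨h1, ?_⟩
    by_contra h
    exact hij (hdeg y hy i j (fun h' => h (h' ▸ h1)))

/-- **Lemma.** Let `R = M_n(F) = ⊕_{g ∈ G} R_g` be a matrix algebra with an elementary
`G`-grading.  If the identity component `R_e = A₁ ⊕ A₂` is the sum of two simple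
components, then there is `g ∈ G`, `g ≠ e`, with `A₁ R A₂ ⊆ R_g`. -/
theorem product_of_simple_components_homogeneous
    (F : Type*) [Field F]
    (G : Type*) [Group G] [DecidableEq G]
    (n : ℕ)
    (A : G → Submodule F (Matrix (Fin n) (Fin n) F))
    (hA : IsAlgGrading F G A)
    (helem : ∃ t : Fin n → G, ∀ g, A g = elemGrading F t g)
    (S₁ S₂ : Submodule F (Matrix (Fin n) (Fin n) F))
    (hS1ne : S₁ ≠ ⊥) (hS2ne : S₂ ≠ ⊥)
    (hmul1 : ∀ x ∈ S₁, ∀ y ∈ S₁, x * y ∈ S₁)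
    (hmul2 : ∀ x ∈ S₂, ∀ y ∈ S₂, x * y ∈ S₂)
    (hann : ∀ x ∈ S₁, ∀ y ∈ S₂, x * y = 0 ∧ y * x = 0)
    (hsum : A (1 : G) = S₁ ⊔ S₂) (hdisj : S₁ ⊓ S₂ = ⊥)
    (hsimple1 : ∀ I : Submodule F (Matrix (Fin n) (Fin n) F), I ≤ S₁ →
      (∀ x ∈ S₁, ∀ y ∈ I, x * y ∈ I ∧ y * x ∈ I) → I = ⊥ ∨ I = S₁)
    (hsimple2 : ∀ I : Submodule F (Matrix (Fin n) (Fin n) F), I ≤ S₂ →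
      (∀ x ∈ S₂, ∀ y ∈ I, x * y ∈ I ∧ y * x ∈ I) → I = ⊥ ∨ I = S₂) :
    ∃ g : G, g ≠ 1 ∧ ∀ a ∈ S₁, ∀ x : Matrix (Fin n) (Fin n) F, ∀ b ∈ S₂,
      a * x * b ∈ A g := by
  classical
  obtain ⟨t, ht⟩ := helem
  have hl1 : S₁ ≤ elemGrading F t 1 := by rw [← ht, hsum]; exact le_sup_left
  have hl2 : S₂ ≤ elemGrading F t 1 := by rw [← ht, hsum]; exact le_sup_right
  have hi1 : ∀ z ∈ elemGrading F t 1, ∀ x ∈ S₁, z * x ∈ S₁ := by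
    intro z hz x hx
    rw [← ht, hsum] at hz
    obtain ⟨u, hu, v, hv, rfl⟩ := Submodule.mem_sup.1 hz
    rw [add_mul, (hann x hx v hv).2, add_zero]
    exact hmul1 u hu x hx
  have hi2 : ∀ z ∈ elemGrading F t 1, ∀ x ∈ S₂, z * x ∈ S₂ := by
    intro z hz x hx
    rw [← ht, hsum] at hz
    obtain ⟨u, hu, v, hv, rfl⟩ := Submodule.mem_sup.1 hz
    rw [add_mul, (hann u hu x hx).1, zero_add]
    exact hmul2 v hv x hx
  obtain ⟨c, hc, x, hx, a, b, hab⟩ :=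
    simple_component_support F G n t S₁ hS1ne hl1 hi1 hsimple1
  obtain ⟨d, hd, y, hy, i, j, hij⟩ :=
    simple_component_support F G n t S₂ hS2ne hl2 hi2 hsimple2
  refine ⟨c⁻¹ * d, ?_, ?_⟩
  · intro hcd
    rw [inv_mul_eq_one] at hcd
    have hE : Matrix.single b i (1 : F) ∈ elemGrading F t 1 := by
      intro k l hkl
      refine Matrix.single_apply_of_ne _ _ _ _ _ ?_
      rintro ⟨rfl, rfl⟩
      apply hkl
      rw [(hc x hx _ _ hab).2, (hd y hy _ _ hij).1, hcd, inv_mul_cancel]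
    have h0 := (hann x hx _ (hi2 _ hE y hy)).1
    have h1 := congrFun (congrFun h0 a) j
    rw [Matrix.mul_apply, Finset.sum_eq_single b] at h1
    · rw [Matrix.single_mul_apply_same, one_mul] at h1
      exact (mul_ne_zero hab hij) h1
    · intro k _ hk
      rw [Matrix.single_mul_apply_of_ne _ _ _ _ _ hk, mul_zero]
    · simp
  · intro u hu z v hv
    rw [ht]
    intro k l hkl
    by_cases hk : t k = c
    · by_cases hl : t l = d
      · exact absurd (by rw [hk, hl]) hkl
      · rw [Matrix.mul_apply]
        refine Finset.sum_eq_zero fun m _ => ?_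
        have : v m l = 0 := by
          by_contra h
          exact hl (hd v hv _ _ h).2
        rw [this, mul_zero]
    · rw [Matrix.mul_assoc, Matrix.mul_apply]
      refine Finset.sum_eq_zero fun m _ => ?_
      have : u k m = 0 := by
        by_contra h
        exact hk (hc u hu _ _ h).1
      rw [this, zero_mul]
end
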